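/- The asymptotic variety S_𝒫 of the Pinchuk map 𝒫 equals the parametrized curve {(p(s), q(s)) : s ∈ ℝ}, where p(s) = s² − 1 and q(s) = −75s⁵ + (345/4)s⁴ − 29s³ + (117/2)s² − 163/4. That is, a point α ∈ ℝ² is the limit of 𝒫(ξ_k) for some sequence (ξ_k) with ‖ξ_k‖ → ∞ if and only if α = (p(s), q(s)) for some s ∈ ℝ. -/

import Mathlib

open Filter Topology

noncomputable section

/-- `t = x·y − 1` -/
def tP (x y : ℝ) : ℝ := x * y - 1

/-- `h = t·(x·t + 1)` -/
def hP (x y : ℝ) : ℝ := tP x y * (x * tP x y + 1)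

/-- `f = (x·t + 1)²·(t² + y)` -/
def fP (x y : ℝ) : ℝ := (x * tP x y + 1) ^ 2 * ((tP x y) ^ 2 + y)

/-- First component `P = f + h` of the Pinchuk map. -/
def PP (x y : ℝ) : ℝ := fP x y + hP x y

/-- Second component `Q` of the Pinchuk map. -/
def QP (x y : ℝ) : ℝ :=
  -(tP x y) ^ 2 - 6 * tP x y * hP x y * (hP x y + 1) - 170 * fP x y * hP x y
    - 91 * (hP x y) ^ 2 - 195 * fP x y * (hP x y) ^ 2 - 69 * (hP x y) ^ 3
    - 75 * fP x y * (hP x y) ^ 3 - (75 / 4) * (hP x y) ^ 4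

/-- The Pinchuk map `𝒫 = (P, Q) : ℝ² → ℝ²`. -/
def Pinchuk (z : ℝ × ℝ) : ℝ × ℝ := (PP z.1 z.2, QP z.1 z.2)
/-- `p(s) = s² − 1`. -/
def pParam (s : ℝ) : ℝ := s ^ 2 - 1

/-- `q(s) = −75s⁵ + (345/4)s⁴ − 29s³ + (117/2)s² − 163/4`. -/
def qParam (s : ℝ) : ℝ :=
  -75 * s ^ 5 + (345 / 4) * s ^ 4 - 29 * s ^ 3 + (117 / 2) * s ^ 2 - 163 / 4

theorem ultra_dichotomy {ι : Type*} (U : Ultrafilter ι) (g : ι → ℝ) :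
    (∃ l, Tendsto g U (𝓝 l)) ∨ Tendsto (fun k => |g k|) U atTop := by
  by_cases hb : ∃ C, ∀ᶠ k in (U : Filter ι), |g k| ≤ C
  · left
    obtain ⟨C, hC⟩ := hb
    have hK : IsCompact (Set.Icc (-C) C) := isCompact_Icc
    have hle : ((U.map g : Ultrafilter ℝ) : Filter ℝ) ≤ 𝓟 (Set.Icc (-C) C) := by
      rw [le_principal_iff, Ultrafilter.coe_map, mem_map]
      filter_upwards [hC] with k hk
      exact abs_le.mp hk
    obtain ⟨l, -, hl⟩ := hK.ultrafilter_le_nhds _ hle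
    exact ⟨l, hl⟩
  · right
    push Not at hb
    rw [tendsto_atTop]
    intro C
    have h1 := hb C
    filter_upwards [h1] with k hk
    exact le_of_lt hk

theorem inv_tendsto_of_abs {ι : Type*} {l : Filter ι} {g : ι → ℝ}
    (h : Tendsto (fun k => |g k|) l atTop) : Tendsto (fun k => (g k)⁻¹) l (𝓝 0) := by
  rw [tendsto_zero_iff_abs_tendsto_zero]
  have := h.inv_tendsto_atTop
  refine this.congr (fun k => ?_)
  simp [abs_inv]

theorem ne_zero_of_abs {ι : Type*} {l : Filter ι} {g : ι → ℝ}
    (h : Tendsto (fun k => |g k|) l atTop) : ∀ᶠ k in l, g k ≠ 0 := by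
  filter_upwards [h.eventually_gt_atTop 0] with k hk
  exact abs_pos.mp hk

theorem f_lim {ι : Type*} {l : Filter ι} {F : ι → ℝ × ℝ} {α : ℝ × ℝ}
    (h : Tendsto F l (𝓝 α)) :
    Tendsto (fun k => (F k).1) l (𝓝 α.1) ∧ Tendsto (fun k => (F k).2) l (𝓝 α.2) :=
  ⟨(continuous_fst.tendsto α).comp h, (continuous_snd.tendsto α).comp h⟩

/-- Rational relation between `P`, `Q` and `w = 1/h`. -/
theorem rel_w (x y w : ℝ) (hw : hP x y * w = 1) :
    QP x y * w ^ 4 * (1 - PP x y * w) ^ 2 =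
      -(1 + 2 * w - PP x y * w ^ 2) ^ 2
      - 6 * (1 + 2 * w - PP x y * w ^ 2) * (1 + w) * (1 - PP x y * w)
      - (170 * PP x y * w ^ 3 - 79 * w ^ 2 + 195 * PP x y * w ^ 2 - 126 * w
          + 75 * PP x y * w - 225 / 4) * (1 - PP x y * w) ^ 2 := by
  have e1 : tP x y * (hP x y - PP x y) = hP x y ^ 3 + 2 * hP x y ^ 2 - PP x y * hP x y := by
    unfold PP fP hP tP; ring
  have e2 : QP x y = -(tP x y) ^ 2 - 6 * tP x y * hP x y * (hP x y + 1)
      - (170 * PP x y * hP x y - 79 * hP x y ^ 2 + 195 * PP x y * hP x y ^ 2 - 126 * hP x y ^ 3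
          + 75 * PP x y * hP x y ^ 3 - 225 / 4 * hP x y ^ 4) := by
    unfold QP PP; ring
  rw [e2]
  generalize hP x y = h at *
  generalize tP x y = t at *
  generalize PP x y = p at *
  have hh : h ≠ 0 := by rintro rfl; simp at hw
  have hw' : w = h⁻¹ := eq_inv_of_mul_eq_one_right hw
  have e3 : t * w ^ 2 * (1 - p * w) = 1 + 2 * w - p * w ^ 2 := by
    subst hw'
    field_simp
    linear_combination e1
  rw [← e3]
  subst hw'
  field_simp

theorem forward (ξ : ℕ → ℝ × ℝ) (α : ℝ × ℝ)
    (hn : Tendsto (fun k => ‖ξ k‖) atTop atTop)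
    (hlim : Tendsto (fun k => Pinchuk (ξ k)) atTop (𝓝 α)) :
    ∃ s : ℝ, α = (pParam s, qParam s) := by
  let U : Ultrafilter ℕ := Ultrafilter.of atTop
  have hU : (U : Filter ℕ) ≤ atTop := Ultrafilter.of_le _
  replace hn := hn.mono_left hU
  replace hlim := hlim.mono_left hU
  obtain ⟨hp, hq⟩ := f_lim hlim
  obtain ⟨a, b⟩ := α
  set x : ℕ → ℝ := fun k => (ξ k).1 with hx
  set y : ℕ → ℝ := fun k => (ξ k).2 with hy
  change Tendsto (fun k => PP (x k) (y k)) U (𝓝 a) at hp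
  change Tendsto (fun k => QP (x k) (y k)) U (𝓝 b) at hq
  have hcon : ∀ x0 y0, Tendsto x U (𝓝 x0) → Tendsto y U (𝓝 y0) → False := by
    intro x0 y0 h1 h2
    have h3 : Tendsto (fun k => ‖(x k, y k)‖) U (𝓝 ‖(x0, y0)‖) :=
      (h1.prodMk_nhds h2).norm
    exact not_tendsto_nhds_of_tendsto_atTop hn _ h3
  -- h converges
  obtain ⟨h0, hh⟩ : ∃ l, Tendsto (fun k => hP (x k) (y k)) U (𝓝 l) := by
    rcases ultra_dichotomy U (fun k => hP (x k) (y k)) with h | h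
    · exact h
    exfalso
    have hw := inv_tendsto_of_abs h
    have hne := ne_zero_of_abs h
    have hT := (hw.prodMk_nhds (hp.prodMk_nhds hq))
    have c1 : Continuous (fun z : ℝ × ℝ × ℝ => z.2.2 * z.1 ^ 4 * (1 - z.2.1 * z.1) ^ 2) := by
      fun_prop
    have c2 : Continuous (fun z : ℝ × ℝ × ℝ => -(1 + 2 * z.1 - z.2.1 * z.1 ^ 2) ^ 2
      - 6 * (1 + 2 * z.1 - z.2.1 * z.1 ^ 2) * (1 + z.1) * (1 - z.2.1 * z.1)
      - (170 * z.2.1 * z.1 ^ 3 - 79 * z.1 ^ 2 + 195 * z.2.1 * z.1 ^ 2 - 126 * z.1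
          + 75 * z.2.1 * z.1 - 225 / 4) * (1 - z.2.1 * z.1) ^ 2) := by
      fun_prop
    have t1 := (c1.tendsto _).comp hT
    have t2 := (c2.tendsto _).comp hT
    have t3 := tendsto_nhds_unique (t1.congr' ?_) t2
    · norm_num at t3
    · filter_upwards [hne] with k hk
      exact rel_w _ _ _ (mul_inv_cancel₀ hk)
  have hf : Tendsto (fun k => fP (x k) (y k)) U (𝓝 (a - h0)) := by
    refine (hp.sub hh).congr (fun k => ?_)
    simp [PP]
  obtain ⟨t0, ht⟩ : ∃ l, Tendsto (fun k => tP (x k) (y k)) U (𝓝 l) := by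
    rcases ultra_dichotomy U (fun k => tP (x k) (y k)) with h | h
    · exact h
    exfalso
    have hw := inv_tendsto_of_abs h
    have hne := ne_zero_of_abs h
    have hT := (hw.prodMk_nhds (hh.prodMk_nhds (hf.prodMk_nhds hq)))
    have c1 : Continuous (fun z : ℝ × ℝ × ℝ × ℝ => z.2.2.2 * z.1 ^ 2) := by
      fun_prop
    have c2 : Continuous (fun z : ℝ × ℝ × ℝ × ℝ => -1 - 6 * z.1 * z.2.1 * (z.2.1 + 1)
        - (170 * z.2.2.1 * z.2.1 + 91 * z.2.1 ^ 2 + 195 * z.2.2.1 * z.2.1 ^ 2 + 69 * z.2.1 ^ 3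
          + 75 * z.2.2.1 * z.2.1 ^ 3 + 75 / 4 * z.2.1 ^ 4) * z.1 ^ 2) := by
      fun_prop
    have t1 := (c1.tendsto _).comp hT
    have t2 := (c2.tendsto _).comp hT
    have t3 := tendsto_nhds_unique (t1.congr' ?_) t2
    · norm_num at t3
    · filter_upwards [hne] with k hk
      simp only [Function.comp, QP]
      field_simp
      ring
  have eqx : ∀ k, x k * tP (x k) (y k) ^ 2 = hP (x k) (y k) - tP (x k) (y k) := by
    intro k; unfold hP; ring
  by_cases ht0 : t0 = 0
  · subst ht0
    rcases ultra_dichotomy U x with ⟨x0, h⟩ | h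
    · exfalso
      have hu : Tendsto (fun k => x k * tP (x k) (y k) + 1) U (𝓝 (x0 * 0 + 1)) :=
        (h.mul ht).add_const 1
      have hune := hu.eventually_ne (show x0 * 0 + 1 ≠ (0:ℝ) by norm_num)
      have hY := (hf.div (hu.pow 2) (by norm_num)).sub (ht.pow 2)
      refine hcon _ _ h (hY.congr' ?_)
      filter_upwards [hune] with k hk
      simp only [Pi.div_apply, fP]
      field_simp
      ring
    · have hw := inv_tendsto_of_abs h
      have hne := ne_zero_of_abs h
      have hF := (((hh.sub ht).add (ht.const_mul 2)).add hw).mul (hh.add_const 1)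
      have e := tendsto_nhds_unique (hF.congr' (f₂ := fun k => fP (x k) (y k)) ?_) hf
      · have hQ := ((((((((ht.pow 2).neg).sub (((ht.const_mul 6).mul hh).mul (hh.add_const 1))).sub
          ((hf.const_mul 170).mul hh)).sub ((hh.pow 2).const_mul 91)).sub
          ((hf.const_mul 195).mul (hh.pow 2))).sub ((hh.pow 3).const_mul 69)).sub
          ((hf.const_mul 75).mul (hh.pow 3))).sub ((hh.pow 4).const_mul (75 / 4))
        have e2 := tendsto_nhds_unique hq hQ
        have e3 : a = h0 ^ 2 + 2 * h0 := by linear_combination -e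
        refine ⟨h0 + 1, ?_⟩
        rw [e2, e3]
        unfold pParam qParam
        ext
        · simp only; ring
        · simp only; ring
      · filter_upwards [hne] with k hk
        rw [← eqx]
        unfold fP hP tP
        field_simp
        ring
  · exfalso
    have htne := ht.eventually_ne ht0
    have hX : Tendsto x U (𝓝 ((h0 - t0) / t0 ^ 2)) := by
      refine ((hh.sub ht).div (ht.pow 2) (pow_ne_zero 2 ht0)).congr' ?_
      filter_upwards [htne] with k hk
      simp only [Pi.div_apply]
      rw [← eqx]
      field_simp
    generalize (h0 - t0) / t0 ^ 2 = x0 at hX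
    have hu : Tendsto (fun k => x k * tP (x k) (y k) + 1) U (𝓝 (x0 * t0 + 1)) :=
      (hX.mul ht).add_const 1
    by_cases hu0 : x0 * t0 + 1 = 0
    · have hx0 : x0 ≠ 0 := by rintro rfl; simp at hu0
      have hxne := hX.eventually_ne hx0
      refine hcon _ _ hX (((ht.add_const 1).div hX hx0).congr' ?_)
      filter_upwards [hxne] with k hk
      simp only [Pi.div_apply, tP]
      field_simp
      ring
    · have hune := hu.eventually_ne hu0
      have hY := (hf.div (hu.pow 2) (pow_ne_zero 2 hu0)).sub (ht.pow 2)
      refine hcon _ _ hX (hY.congr' ?_)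
      filter_upwards [hune] with k hk
      simp only [Pi.div_apply, fP]
      field_simp
      ring

theorem backward (s : ℝ) : ∃ ξ : ℕ → ℝ × ℝ, Tendsto (fun k => ‖ξ k‖) atTop atTop ∧
    Tendsto (fun k => Pinchuk (ξ k)) atTop (𝓝 (pParam s, qParam s)) := by
  obtain ⟨σ, r, hσ, hr⟩ : ∃ σ r : ℝ, |σ| = 1 ∧ σ * r ^ 2 = s - 1 := by
    rcases le_total 0 (s - 1) with h | h
    · exact ⟨1, √(s - 1), by simp, by rw [Real.sq_sqrt h]; ring⟩
    · exact ⟨-1, √(-(s - 1)), by simp, by rw [Real.sq_sqrt (by linarith)]; ring⟩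
  have hσ0 : σ ≠ 0 := by rintro rfl; simp at hσ
  have hσ2 : σ⁻¹ = σ := by
    have : σ ^ 2 = 1 := by rw [← sq_abs, hσ]; norm_num
    field_simp; linarith
  set c := s - 1 with hc
  let w : ℕ → ℝ := fun k => ((k : ℝ) + 1)⁻¹
  have hw0 : ∀ k, w k ≠ 0 := fun k => by positivity
  have hk : Tendsto (fun k : ℕ => (k : ℝ) + 1) atTop atTop :=
    tendsto_atTop_add_const_right _ _ tendsto_natCast_atTop_atTop
  have hw : Tendsto w atTop (𝓝 0) := hk.inv_tendsto_atTop
  let X : ℕ → ℝ := fun k => σ * ((w k)⁻¹) ^ 2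
  let Y : ℕ → ℝ := fun k => (r * w k + 1) * (σ * w k ^ 2)
  have ht : ∀ k, tP (X k) (Y k) = r * w k := by
    intro k
    have := hw0 k
    have h2 : σ * σ = 1 := by nth_rewrite 1 [← hσ2]; exact inv_mul_cancel₀ hσ0
    simp only [tP, X, Y]
    field_simp
    linear_combination (1 + w k * r) * h2
  have hh : ∀ k, hP (X k) (Y k) = c + r * w k := by
    intro k
    have := hw0 k
    unfold hP
    rw [ht, ← hr]
    simp only [X]
    field_simp
  have hf : ∀ k, fP (X k) (Y k) = (c + 2 * (r * w k) + σ * w k ^ 2) * (c + r * w k + 1) := by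
    intro k
    have := hw0 k
    have h2 : σ * σ = 1 := by nth_rewrite 1 [← hσ2]; exact inv_mul_cancel₀ hσ0
    have hX : X k ≠ 0 := mul_ne_zero hσ0 (pow_ne_zero 2 (inv_ne_zero this))
    have e1 : X k * fP (X k) (Y k) = (X k * tP (X k) (Y k) + 1) ^ 2 * (hP (X k) (Y k) + 1) := by
      unfold fP hP tP; ring
    rw [ht, hh] at e1
    have e2 : σ * w k ^ 2 * X k = 1 := by
      simp only [X]; field_simp; linear_combination h2
    have e3 : X k * (r * w k) ^ 2 = c := by
      rw [← hr]; simp only [X]; field_simp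
    apply mul_left_cancel₀ hX
    rw [e1]
    linear_combination (c + r * w k + 1) * (X k * e3 - e2)
  refine ⟨fun k => (X k, Y k), ?_, ?_⟩
  · refine tendsto_atTop_mono (f := fun k : ℕ => (k : ℝ) + 1) (fun k => ?_) hk
    refine le_trans ?_ (norm_fst_le (X k, Y k))
    simp only [X, w, Real.norm_eq_abs, abs_mul, hσ, inv_inv, one_mul]
    rw [abs_of_nonneg (by positivity)]
    have : (0 : ℝ) ≤ k := Nat.cast_nonneg k
    nlinarith
  · let G : ℝ → ℝ × ℝ := fun v =>
      let t := r * v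
      let h := c + r * v
      let f := (c + 2 * (r * v) + σ * v ^ 2) * (c + r * v + 1)
      (f + h, -t ^ 2 - 6 * t * h * (h + 1) - 170 * f * h
        - 91 * h ^ 2 - 195 * f * h ^ 2 - 69 * h ^ 3 - 75 * f * h ^ 3 - (75 / 4) * h ^ 4)
    have hG : Continuous G := by
      simp only [G]; fun_prop
    have h1 := (hG.tendsto 0).comp hw
    have h2 : G 0 = (pParam s, qParam s) := by
      simp only [G, pParam, qParam, hc]
      ext
      · simp only; ring
      · simp only; ring
    rw [h2] at h1
    refine h1.congr (fun k => ?_)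
    simp only [Function.comp, G, Pinchuk, PP, QP, ht, hh, hf]

/-- the asymptotic variety of the Pinchuk map is exactly the curve
`{(p(s), q(s)) : s ∈ ℝ}`: a point `α ∈ ℝ²` is a limit of `𝒫(ξ k)` along a sequence
with `‖ξ k‖ → ∞` if and only if `α = (p s, q s)` for some `s ∈ ℝ`. -/
theorem pinchuk_asymptotic_variety (α : ℝ × ℝ) :
    (∃ ξ : ℕ → ℝ × ℝ, Tendsto (fun k => ‖ξ k‖) atTop atTop ∧
        Tendsto (fun k => Pinchuk (ξ k)) atTop (𝓝 α)) ↔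
      ∃ s : ℝ, α = (pParam s, qParam s) := by
  constructor
  · rintro ⟨ξ, hn, hl⟩
    exact forward ξ α hn hl
  · rintro ⟨s, rfl⟩
    exact backward s
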